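/- arXiv:1107.3882 — 3 statements merged into one kernel-verified Lean document; each statement's English description precedes it below -/
import Mathlib

section
/- For all real numbers x₁, x₂, x₃ with |x₁| + |x₂| + |x₃| < 1, one has Σ_{i₁,i₂,i₃ ≥ 0} Ω(i₁,i₂,i₃)·x₁^{i₁} x₂^{i₂} x₃^{i₃} = (1 − x₁ − x₃) / ((1 − x₁)(1 − x₃)(1 − x₁ − x₂ − x₃)). -/
/-- The monotonicity condition: for the list of block lengths `a`, a permutation `τ` of
`{0, …, a.sum}` must increase on the `k`-th block for even `k` (0-indexed, i.e. odd blocks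
in 1-indexed counting) and decrease on the `k`-th block for odd `k`. -/
def MonotCond (a : List ℕ) (τ : Equiv.Perm (Fin (a.sum + 1))) : Prop :=
  ∀ k, k < a.length →
    ∀ j, (a.take k).sum ≤ j → j < (a.take (k + 1)).sum →
      ∀ h : j + 1 < a.sum + 1,
        if k % 2 = 0
        then τ ⟨j, Nat.lt_of_succ_lt h⟩ < τ ⟨j + 1, h⟩
        else τ ⟨j + 1, h⟩ < τ ⟨j, Nat.lt_of_succ_lt h⟩

/-- `Omega a` is the number of permutations of `{0, …, a.sum}` with the prescribed
alternating monotonicity pattern given by the block lengths in `a`. -/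
noncomputable def Omega (a : List ℕ) : ℕ :=
  Nat.card {τ : Equiv.Perm (Fin (a.sum + 1)) // MonotCond a τ}

open Classical in
/-- Up-pattern: `u j` holds iff the permutation rises at position `j`. -/
def GoodPat (n : ℕ) (u : ℕ → Prop) (τ : Equiv.Perm (Fin n)) : Prop :=
  ∀ j, ∀ h : j + 1 < n, (u j ↔ τ ⟨j, Nat.lt_of_succ_lt h⟩ < τ ⟨j + 1, h⟩)

open Classical in
noncomputable def cntPat (n : ℕ) (u : ℕ → Prop) : ℕ :=
  (Finset.univ.filter (fun τ : Equiv.Perm (Fin n) => GoodPat n u τ)).card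

def pat3 (a b j : ℕ) : Prop := j < a ∨ a + b ≤ j

lemma monot_iff (a b c : ℕ) (τ : Equiv.Perm (Fin ([a, b, c].sum + 1))) :
    MonotCond [a, b, c] τ ↔ GoodPat ([a, b, c].sum + 1) (pat3 a b) τ := by
  have hs : [a, b, c].sum = a + b + c := by simp [add_assoc]
  have key : ∀ j (h : j + 1 < [a, b, c].sum + 1),
      τ ⟨j + 1, h⟩ < τ ⟨j, Nat.lt_of_succ_lt h⟩ ↔
      ¬ τ ⟨j, Nat.lt_of_succ_lt h⟩ < τ ⟨j + 1, h⟩ := by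
    intro j h
    rw [not_lt]
    constructor
    · exact le_of_lt
    · intro h1
      refine lt_of_le_of_ne h1 (fun h2 => ?_)
      have := congrArg Fin.val (τ.injective h2)
      simp only at this
      omega
  constructor
  · intro H j h
    by_cases h1 : j < a
    · have := H 0 (by simp) j (by simp) (by simpa using h1) h
      simp at this
      simp [pat3, h1, this]
    · by_cases h2 : j < a + b
      · have := H 1 (by simp) j (by simp; omega) (by simpa using h2) h
        rw [if_neg (by norm_num), key] at this
        have h3 : ¬ pat3 a b j := by unfold pat3; omega
        tauto
      · have := H 2 (by simp) j (by simp; omega) (by simp; omega) h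
        simp at this
        have h3 : pat3 a b j := by unfold pat3; omega
        exact ⟨fun _ => this, fun _ => h3⟩
  · intro H k hk j h1 h2 h
    have hk3 : k < 3 := by simpa using hk
    have H := H j h
    interval_cases k
    · simp at h1 h2
      rw [if_pos (by norm_num)]
      exact H.1 (Or.inl h2)
    · simp at h1 h2
      rw [if_neg (by norm_num), key, ← H]
      unfold pat3; omega
    · simp at h1 h2
      rw [if_pos (by norm_num)]
      exact H.1 (Or.inr (by omega))

lemma omega_eq (a b c : ℕ) : Omega [a, b, c] = cntPat (a + b + c + 1) (pat3 a b) := by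
  classical
  have hs : [a, b, c].sum = a + b + c := by simp [add_assoc]
  rw [← hs]
  unfold Omega cntPat
  rw [Nat.card_eq_fintype_card, Fintype.card_subtype]
  congr 1
  ext τ
  simp only [Finset.mem_filter, monot_iff]

/-- insert the maximal value at position `p`. -/
def insMax {n : ℕ} (p : Fin (n + 1)) (σ : Equiv.Perm (Fin n)) : Equiv.Perm (Fin (n + 1)) :=
  ((finSuccEquiv' p).trans (Equiv.optionCongr σ)).trans (finSuccEquiv' (Fin.last n)).symm

lemma insMax_self {n : ℕ} (p : Fin (n + 1)) (σ : Equiv.Perm (Fin n)) :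
    insMax p σ p = Fin.last n := by
  simp [insMax]

lemma insMax_succAbove {n : ℕ} (p : Fin (n + 1)) (σ : Equiv.Perm (Fin n)) (i : Fin n) :
    insMax p σ (p.succAbove i) = (σ i).castSucc := by
  simp [insMax]

lemma insMax_lt {n : ℕ} (p : Fin (n + 1)) (σ : Equiv.Perm (Fin n)) {j : ℕ} (h : j < n)
    (hp : j < p.val) : insMax p σ ⟨j, by omega⟩ = (σ ⟨j, h⟩).castSucc := by
  rw [← insMax_succAbove p, Fin.succAbove_of_castSucc_lt _ _ (by simpa [Fin.lt_def] using hp)]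
  rfl

lemma insMax_ge {n : ℕ} (p : Fin (n + 1)) (σ : Equiv.Perm (Fin n)) {j : ℕ} (h : j < n)
    (hp : p.val ≤ j) : insMax p σ ⟨j + 1, by omega⟩ = (σ ⟨j, h⟩).castSucc := by
  rw [← insMax_succAbove p, Fin.succAbove_of_le_castSucc _ _ (by simpa [Fin.le_def] using hp)]
  rfl

lemma insMax_inj {n : ℕ} (p : Fin (n + 1)) : Function.Injective (insMax p) := by
  intro σ σ' h
  ext i
  have := congrArg (fun f => f (p.succAbove i)) h
  simp only [insMax_succAbove] at this
  simpa using congrArg Fin.val this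

lemma insMax_surj {n : ℕ} (p : Fin (n + 1)) (τ : Equiv.Perm (Fin (n + 1)))
    (h : τ p = Fin.last n) : ∃ σ, insMax p σ = τ := by
  have hne : ∀ i, τ (p.succAbove i) ≠ Fin.last n := by
    intro i hi
    rw [← h] at hi
    exact Fin.succAbove_ne p i (τ.injective hi)
  let f : Fin n → Fin n := fun i => (τ (p.succAbove i)).castPred (hne i)
  have hf : Function.Injective f := by
    intro i j hij
    have : τ (p.succAbove i) = τ (p.succAbove j) := by simpa [f] using hij
    exact Fin.succAbove_right_injective (τ.injective this)
  refine ⟨Equiv.ofBijective f (Finite.injective_iff_bijective.1 hf), ?_⟩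
  apply Equiv.ext
  intro x
  rcases Fin.eq_self_or_eq_succAbove p x with rfl | ⟨i, rfl⟩
  · rw [insMax_self, h]
  · rw [insMax_succAbove]; simp [f]

open Classical in
lemma card_ins {n : ℕ} (p : Fin (n + 1)) (Q : Equiv.Perm (Fin (n + 1)) → Prop)
    (Q' : Equiv.Perm (Fin n) → Prop) (h : ∀ σ, Q (insMax p σ) ↔ Q' σ) :
    (Finset.univ.filter (fun τ => Q τ ∧ τ p = Fin.last n)).card =
    (Finset.univ.filter Q').card := by
  symm
  rw [← Finset.card_image_of_injective _ (insMax_inj p)]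
  congr 1
  ext τ
  simp only [Finset.mem_image, Finset.mem_filter, Finset.mem_univ, true_and]
  constructor
  · rintro ⟨σ, h1, rfl⟩
    exact ⟨(h σ).2 h1, insMax_self p σ⟩
  · rintro ⟨h1, h2⟩
    obtain ⟨σ, rfl⟩ := insMax_surj p τ h2
    exact ⟨σ, (h σ).1 h1, rfl⟩

/-- the max inserted at the end -/
lemma good_last {n : ℕ} (u : ℕ → Prop) (σ : Equiv.Perm (Fin n)) (hu : n = 0 ∨ u (n - 1)) :
    GoodPat (n + 1) u (insMax (Fin.last n) σ) ↔ GoodPat n u σ := by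
  constructor
  · intro H j h
    have := H j (by omega)
    rwa [insMax_lt _ _ (by omega) (by simp; omega), insMax_lt _ _ h (by simp; omega),
      Fin.castSucc_lt_castSucc_iff] at this
  · intro H j h
    by_cases hj : j + 1 < n
    · rw [insMax_lt _ _ (by omega) (by simp; omega), insMax_lt _ _ hj (by simp; omega),
        Fin.castSucc_lt_castSucc_iff]
      exact H j hj
    · obtain rfl : n = j + 1 := by omega
      have h2 : (⟨j + 1, h⟩ : Fin (j + 1 + 1)) = Fin.last (j + 1) := rfl
      rw [h2, insMax_self, insMax_lt _ _ (by omega) (by simp)]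
      have : u j := by simpa using hu
      simp [this, Fin.castSucc_lt_last]

/-- the max inserted at the peak -/
lemma good_peak {n a b : ℕ} (hn : a < n) (σ : Equiv.Perm (Fin n)) :
    GoodPat (n + 1) (pat3 a (b + 1)) (insMax ⟨a, by omega⟩ σ) ↔
      ∀ j, ∀ h : j + 1 < n, j + 1 ≠ a →
        (pat3 a b j ↔ σ ⟨j, Nat.lt_of_succ_lt h⟩ < σ ⟨j + 1, h⟩) := by
  have e1 : ∀ j, j < a → (pat3 a (b + 1) j ↔ pat3 a b j) := by
    intro j hj; unfold pat3; omega
  have e2 : ∀ j, a ≤ j → (pat3 a (b + 1) (j + 1) ↔ pat3 a b j) := by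
    intro j hj; unfold pat3; omega
  constructor
  · intro H j h hja
    by_cases hj : j + 1 < a
    · have := H j (by omega)
      rwa [insMax_lt _ _ (by omega) (by simp; omega), insMax_lt _ _ h (by simpa using hj),
        Fin.castSucc_lt_castSucc_iff, e1 _ (by omega)] at this
    · have := H (j + 1) (by omega)
      rwa [insMax_ge _ _ (by omega) (by simp; omega), insMax_ge _ _ h (by simp; omega),
        Fin.castSucc_lt_castSucc_iff, e2 _ (by omega)] at this
  · intro H j h
    by_cases hj : j + 1 < a
    · rw [insMax_lt _ _ (by omega) (by simp; omega), insMax_lt _ _ (by omega) (by simpa using hj),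
        Fin.castSucc_lt_castSucc_iff, e1 _ (by omega)]
      exact H j (by omega) (by omega)
    · by_cases hj2 : j + 1 = a
      · subst hj2
        rw [insMax_self, insMax_lt _ _ (by omega) (by simp)]
        simp [pat3, Fin.castSucc_lt_last]
      · by_cases hj3 : j = a
        · subst hj3
          rw [insMax_self]
          have : ¬ pat3 j (b + 1) j := by unfold pat3; omega
          simp [this, Fin.le_last]
        · obtain ⟨i, rfl⟩ : ∃ i, j = i + 1 := ⟨j - 1, by omega⟩
          rw [insMax_ge _ _ (by omega) (by simp; omega), insMax_ge _ _ (by omega) (by simp; omega),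
            Fin.castSucc_lt_castSucc_iff, e2 _ (by omega)]
          exact H i (by omega) (by omega)

lemma max_pos {n a b : ℕ} (hn : a + b + 1 ≤ n) (τ : Equiv.Perm (Fin (n + 1)))
    (H : GoodPat (n + 1) (pat3 a (b + 1)) τ) :
    τ ⟨a, by omega⟩ = Fin.last n ∨ (a + b + 1 < n ∧ τ (Fin.last n) = Fin.last n) := by
  obtain ⟨⟨p, hp⟩, hτ⟩ := τ.surjective (Fin.last n)
  have h1 : p = 0 ∨ pat3 a (b + 1) (p - 1) := by
    rcases p with _ | p
    · simp
    · right
      rw [Nat.add_sub_cancel, H p hp, hτ]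
      refine lt_of_le_of_ne (Fin.le_last _) ?_
      rw [← hτ]
      intro h
      have := τ.injective h
      simp at this
  have h2 : p = n ∨ ¬ pat3 a (b + 1) p := by
    by_cases h : p = n
    · exact Or.inl h
    · right
      rw [H p (by omega), hτ, not_lt]
      exact Fin.le_last _
  unfold pat3 at h1 h2
  by_cases h : p = n
  · subst h
    exact Or.inr ⟨by omega, hτ⟩
  · left
    obtain rfl : p = a := by omega
    exact hτ

open Classical in
noncomputable def cntPeak (n a b : ℕ) : ℕ :=
  (Finset.univ.filter (fun σ : Equiv.Perm (Fin n) => ∀ j, ∀ h : j + 1 < n, j + 1 ≠ a →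
        (pat3 a b j ↔ σ ⟨j, Nat.lt_of_succ_lt h⟩ < σ ⟨j + 1, h⟩))).card

lemma cnt_rec {n a b : ℕ} (hn : a + b + 1 ≤ n) :
    cntPat (n + 1) (pat3 a (b + 1)) = cntPeak n a b +
      if a + b + 1 < n then cntPat n (pat3 a (b + 1)) else 0 := by
  classical
  have A := card_ins (n := n) ⟨a, by omega⟩ _ _ (good_peak (b := b) (show a < n by omega))
  unfold cntPeak
  rw [← A]
  split_ifs with hc
  · have B := card_ins (n := n) (Fin.last n) _ _
      (fun σ => good_last (pat3 a (b + 1)) σ (Or.inr (by unfold pat3; omega)))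
    unfold cntPat
    rw [← B, ← Finset.card_union_of_disjoint]
    · congr 1
      ext τ
      simp only [Finset.mem_filter, Finset.mem_univ, true_and, Finset.mem_union]
      constructor
      · intro h
        rcases max_pos hn τ h with h1 | h1
        · exact Or.inl ⟨h, h1⟩
        · exact Or.inr ⟨h, h1.2⟩
      · rintro (h | h) <;> exact h.1
    · rw [Finset.disjoint_left]
      intro τ h1 h2
      simp only [Finset.mem_filter, Finset.mem_univ, true_and] at h1 h2
      have := τ.injective (h1.2.trans h2.2.symm)
      have := congrArg Fin.val this
      simp at this
      omega
  · unfold cntPat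
    rw [add_zero]
    congr 1
    ext τ
    simp only [Finset.mem_filter, Finset.mem_univ, true_and]
    constructor
    · intro h
      rcases max_pos hn τ h with h1 | h1
      · exact ⟨h, h1⟩
      · exact absurd h1.1 hc
    · exact fun h => h.1

lemma cntPeak_zero (n b : ℕ) : cntPeak n 0 b = cntPat n (pat3 0 b) := by
  classical
  unfold cntPeak cntPat GoodPat
  simp

lemma cntPeak_succ {n a b : ℕ} (hn : a + 1 < n) :
    cntPeak n (a + 1) b = cntPat n (pat3 a (b + 1)) + cntPat n (pat3 (a + 1) b) := by
  classical
  have e : ∀ j, j ≠ a → (pat3 a (b + 1) j ↔ pat3 (a + 1) b j) := by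
    intro j hj; unfold pat3; omega
  have ea : ¬ pat3 a (b + 1) a := by unfold pat3; omega
  have eb : pat3 (a + 1) b a := by unfold pat3; omega
  unfold cntPeak cntPat
  rw [← Finset.card_union_of_disjoint]
  · congr 1
    ext σ
    simp only [Finset.mem_filter, Finset.mem_univ, true_and, Finset.mem_union]
    constructor
    · intro H
      by_cases h : σ ⟨a, by omega⟩ < σ ⟨a + 1, hn⟩
      · right
        intro j hj
        by_cases hja : j = a
        · subst hja; tauto
        · exact H j hj (by omega)
      · left
        intro j hj
        by_cases hja : j = a
        · subst hja; tauto
        · rw [e j hja]; exact H j hj (by omega)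
    · rintro (H | H) j hj hja
      · rw [← e j (by omega)]; exact H j hj
      · exact H j hj
  · rw [Finset.disjoint_left]
    intro σ h1 h2
    simp only [Finset.mem_filter, Finset.mem_univ, true_and] at h1 h2
    have := h1 a hn
    have := h2 a hn
    tauto

lemma cnt_b0 (n a : ℕ) : cntPat n (pat3 a 0) = 1 := by
  classical
  unfold cntPat
  rw [Finset.card_eq_one]
  refine ⟨1, ?_⟩
  ext σ
  have hp : ∀ j, pat3 a 0 j := by intro j; unfold pat3; omega
  simp only [Finset.mem_filter, Finset.mem_univ, true_and, Finset.mem_singleton]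
  constructor
  · intro H
    rcases n with _ | n
    · exact Subsingleton.elim _ _
    · have hm : StrictMono σ := by
        rw [Fin.strictMono_iff_lt_succ]
        intro i
        exact (H i.val (by omega)).1 (hp _)
      have := (StrictMono.range_inj hm strictMono_id).1 (by simp [σ.surjective.range_eq])
      exact Equiv.ext (fun x => congrFun this x)
  · rintro rfl j h
    simp [hp]

noncomputable def wO (a b c : ℕ) : ℝ := (Omega [a, b, c] : ℝ)

lemma wO_rec (a b c : ℕ) : wO a b c =
    (if a = 0 then 0 else wO (a - 1) b c) + (if b = 0 then 0 else wO a (b - 1) c)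
    + (if c = 0 then 0 else wO a b (c - 1)) + (if a = 0 ∧ b = 0 ∧ c = 0 then 1 else 0)
    - (if a ≠ 0 ∧ b = 0 ∧ c ≠ 0 then 1 else 0) := by
  unfold wO
  simp only [omega_eq]
  rcases b with _ | b
  · simp only [cnt_b0]
    by_cases ha : a = 0 <;> by_cases hc : c = 0 <;> simp [ha, hc]
  · rw [cnt_rec (by omega)]
    rcases a with _ | a
    · rw [cntPeak_zero]
      rcases c with _ | c
      · simp
      · simp [show 0 + b + 1 < 0 + (b + 1) + (c + 1) by omega]
        ring_nf
    · rw [cntPeak_succ (by omega)]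
      rcases c with _ | c
      · rw [if_neg (show ¬ (a + 1 + b + 1 < a + 1 + (b + 1) + 0) by omega)]
        simp
        ring_nf
      · simp [show a + 1 + b + 1 < a + 1 + (b + 1) + (c + 1) by omega]
        ring_nf

noncomputable def FF (x₁ x₂ x₃ : ℝ) (i : ℕ × ℕ × ℕ) : ℝ :=
  wO i.1 i.2.1 i.2.2 * x₁ ^ i.1 * x₂ ^ i.2.1 * x₃ ^ i.2.2

noncomputable def sh1 (F : ℕ × ℕ × ℕ → ℝ) (i : ℕ × ℕ × ℕ) : ℝ :=
  if i.1 = 0 then 0 else F (i.1 - 1, i.2.1, i.2.2)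
noncomputable def sh2 (F : ℕ × ℕ × ℕ → ℝ) (i : ℕ × ℕ × ℕ) : ℝ :=
  if i.2.1 = 0 then 0 else F (i.1, i.2.1 - 1, i.2.2)
noncomputable def sh3 (F : ℕ × ℕ × ℕ → ℝ) (i : ℕ × ℕ × ℕ) : ℝ :=
  if i.2.2 = 0 then 0 else F (i.1, i.2.1, i.2.2 - 1)
noncomputable def HH (x₁ x₃ : ℝ) (i : ℕ × ℕ × ℕ) : ℝ :=
  if i.1 ≠ 0 ∧ i.2.1 = 0 ∧ i.2.2 ≠ 0 then x₁ ^ i.1 * x₃ ^ i.2.2 else 0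

lemma FF_rec (x₁ x₂ x₃ : ℝ) (i : ℕ × ℕ × ℕ) :
    FF x₁ x₂ x₃ i = x₁ * sh1 (FF x₁ x₂ x₃) i + x₂ * sh2 (FF x₁ x₂ x₃) i
      + x₃ * sh3 (FF x₁ x₂ x₃) i + (if i = (0, 0, 0) then 1 else 0) - HH x₁ x₃ i := by
  obtain ⟨a, b, c⟩ := i
  unfold sh1 sh2 sh3 HH
  simp only [FF]
  rw [wO_rec a b c]
  rcases a with _ | a <;> rcases b with _ | b <;> rcases c with _ | c <;>
    simp [pow_succ] <;> ring

lemma hasSum_sh1 {F : ℕ × ℕ × ℕ → ℝ} {S : ℝ} (h : HasSum F S) : HasSum (sh1 F) S := by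
  have hi : Function.Injective (fun i : ℕ × ℕ × ℕ => (i.1 + 1, i.2.1, i.2.2)) := by
    rintro ⟨a, b, c⟩ ⟨a', b', c'⟩ h
    simpa using h
  rw [← hi.hasSum_iff]
  · exact h
  · rintro ⟨a, b, c⟩ hx
    rcases a with _ | a
    · simp [sh1]
    · exact absurd ⟨(a, b, c), rfl⟩ hx

lemma hasSum_sh2 {F : ℕ × ℕ × ℕ → ℝ} {S : ℝ} (h : HasSum F S) : HasSum (sh2 F) S := by
  have hi : Function.Injective (fun i : ℕ × ℕ × ℕ => (i.1, i.2.1 + 1, i.2.2)) := by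
    rintro ⟨a, b, c⟩ ⟨a', b', c'⟩ h
    simpa using h
  rw [← hi.hasSum_iff]
  · exact h
  · rintro ⟨a, b, c⟩ hx
    rcases b with _ | b
    · simp [sh2]
    · exact absurd ⟨(a, b, c), rfl⟩ hx

lemma hasSum_sh3 {F : ℕ × ℕ × ℕ → ℝ} {S : ℝ} (h : HasSum F S) : HasSum (sh3 F) S := by
  have hi : Function.Injective (fun i : ℕ × ℕ × ℕ => (i.1, i.2.1, i.2.2 + 1)) := by
    rintro ⟨a, b, c⟩ ⟨a', b', c'⟩ h
    simpa using h
  rw [← hi.hasSum_iff]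
  · exact h
  · rintro ⟨a, b, c⟩ hx
    rcases c with _ | c
    · simp [sh3]
    · exact absurd ⟨(a, b, c), rfl⟩ hx

lemma hasSum_HH {x₁ x₃ : ℝ} (h1 : |x₁| < 1) (h3 : |x₃| < 1) :
    HasSum (HH x₁ x₃) ((x₁ * (1 - x₁)⁻¹) * (x₃ * (1 - x₃)⁻¹)) := by
  have hi : Function.Injective (fun i : ℕ × ℕ => ((i.1 + 1, 0, i.2 + 1) : ℕ × ℕ × ℕ)) := by
    rintro ⟨a, c⟩ ⟨a', c'⟩ h
    simpa using h
  rw [← hi.hasSum_iff]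
  · have s1 := (hasSum_geometric_of_abs_lt_one h1).mul_left x₁
    have s3 := (hasSum_geometric_of_abs_lt_one h3).mul_left x₃
    have hs := summable_mul_of_summable_norm s1.summable.norm s3.summable.norm
    have := s1.mul s3 hs
    have hE : (HH x₁ x₃ ∘ fun i : ℕ × ℕ => ((i.1 + 1, 0, i.2 + 1) : ℕ × ℕ × ℕ)) =
        fun x : ℕ × ℕ => x₁ * x₁ ^ x.1 * (x₃ * x₃ ^ x.2) := by
      funext x
      simp [HH, pow_succ]
      ring
    rw [hE]
    exact this
  · rintro ⟨a, b, c⟩ hx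
    unfold HH
    rw [if_neg]
    rintro ⟨ha, hb, hc⟩
    apply hx
    refine ⟨(a - 1, c - 1), ?_⟩
    simp only [Prod.mk.injEq] at *
    omega

lemma sum_shift_le (N : ℕ) (φ : ℕ → ℝ) (h : ∀ a, 0 ≤ φ a) :
    ∑ a ∈ Finset.range N, (if a = 0 then 0 else φ (a - 1)) ≤ ∑ a ∈ Finset.range N, φ a := by
  rcases N with _ | N
  · simp
  · rw [Finset.sum_range_succ', Finset.sum_range_succ]
    simpa using h N

lemma FF_nonneg {x₁ x₂ x₃ : ℝ} (h1 : 0 ≤ x₁) (h2 : 0 ≤ x₂) (h3 : 0 ≤ x₃) (i : ℕ × ℕ × ℕ) :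
    0 ≤ FF x₁ x₂ x₃ i := by
  unfold FF wO
  positivity

lemma summable_FF_nonneg {x₁ x₂ x₃ : ℝ} (h1 : 0 ≤ x₁) (h2 : 0 ≤ x₂) (h3 : 0 ≤ x₃)
    (hx : x₁ + x₂ + x₃ < 1) : Summable (FF x₁ x₂ x₃) := by
  have hF := FF_nonneg h1 h2 h3
  refine summable_of_sum_le (f := FF x₁ x₂ x₃) (c := 1 / (1 - (x₁ + x₂ + x₃))) hF ?_
  intro u
  obtain ⟨N, hN⟩ : ∃ N, u ⊆ Finset.range N ×ˢ Finset.range N ×ˢ Finset.range N := by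
    refine ⟨u.sup (fun i => i.1 + i.2.1 + i.2.2) + 1, ?_⟩
    rintro ⟨a, b, c⟩ hi
    have := Finset.le_sup (f := fun i : ℕ × ℕ × ℕ => i.1 + i.2.1 + i.2.2) hi
    simp only [Finset.mem_product, Finset.mem_range] at this ⊢
    omega
  refine le_trans (Finset.sum_le_sum_of_subset_of_nonneg (f := FF x₁ x₂ x₃) hN
    (fun i _ _ => hF i)) ?_
  set B := Finset.range N ×ˢ Finset.range N ×ˢ Finset.range N with hB
  have k1 : ∑ i ∈ B, sh1 (FF x₁ x₂ x₃) i ≤ ∑ i ∈ B, FF x₁ x₂ x₃ i := by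
    rw [hB]
    iterate 4 rw [Finset.sum_product_right]
    apply Finset.sum_le_sum; intro c _
    apply Finset.sum_le_sum; intro b _
    exact sum_shift_le N (fun a => FF x₁ x₂ x₃ (a, b, c)) (fun a => hF _)
  have k2 : ∑ i ∈ B, sh2 (FF x₁ x₂ x₃) i ≤ ∑ i ∈ B, FF x₁ x₂ x₃ i := by
    rw [hB, Finset.sum_product, Finset.sum_product]
    apply Finset.sum_le_sum; intro a _
    rw [Finset.sum_product_right, Finset.sum_product_right]
    apply Finset.sum_le_sum; intro c _
    exact sum_shift_le N (fun b => FF x₁ x₂ x₃ (a, b, c)) (fun b => hF _)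
  have k3 : ∑ i ∈ B, sh3 (FF x₁ x₂ x₃) i ≤ ∑ i ∈ B, FF x₁ x₂ x₃ i := by
    rw [hB, Finset.sum_product, Finset.sum_product]
    apply Finset.sum_le_sum; intro a _
    rw [Finset.sum_product, Finset.sum_product]
    apply Finset.sum_le_sum; intro b _
    exact sum_shift_le N (fun c => FF x₁ x₂ x₃ (a, b, c)) (fun b => hF _)
  have kd : ∑ i ∈ B, (if i = ((0, 0, 0) : ℕ × ℕ × ℕ) then (1 : ℝ) else 0) ≤ 1 := by
    rw [Finset.sum_ite_eq']
    split_ifs <;> norm_num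
  have kH : 0 ≤ ∑ i ∈ B, HH x₁ x₃ i := by
    refine Finset.sum_nonneg (fun i _ => ?_)
    unfold HH
    split_ifs <;> positivity
  have key : ∑ i ∈ B, FF x₁ x₂ x₃ i = x₁ * ∑ i ∈ B, sh1 (FF x₁ x₂ x₃) i
      + x₂ * ∑ i ∈ B, sh2 (FF x₁ x₂ x₃) i + x₃ * ∑ i ∈ B, sh3 (FF x₁ x₂ x₃) i
      + ∑ i ∈ B, (if i = ((0, 0, 0) : ℕ × ℕ × ℕ) then (1 : ℝ) else 0)
      - ∑ i ∈ B, HH x₁ x₃ i := by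
    simp only [Finset.mul_sum, ← Finset.sum_add_distrib, ← Finset.sum_sub_distrib]
    exact Finset.sum_congr rfl (fun i _ => FF_rec x₁ x₂ x₃ i)
  rw [le_div_iff₀ (by linarith)]
  have := mul_le_mul_of_nonneg_left k1 h1
  have := mul_le_mul_of_nonneg_left k2 h2
  have := mul_le_mul_of_nonneg_left k3 h3
  linarith

theorem stmt_4 (x₁ x₂ x₃ : ℝ) (hx : |x₁| + |x₂| + |x₃| < 1) :
    ∑' i : ℕ × ℕ × ℕ,
        (Omega [i.1, i.2.1, i.2.2] : ℝ) * x₁ ^ i.1 * x₂ ^ i.2.1 * x₃ ^ i.2.2 =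
      (1 - x₁ - x₃) / ((1 - x₁) * (1 - x₃) * (1 - x₁ - x₂ - x₃)) := by
  have a1 := abs_nonneg x₁
  have a2 := abs_nonneg x₂
  have a3 := abs_nonneg x₃
  have hs : Summable (FF x₁ x₂ x₃) := by
    refine Summable.of_norm ?_
    convert summable_FF_nonneg a1 a2 a3 hx using 1
    ext i
    simp [FF, wO]
  change ∑' i, FF x₁ x₂ x₃ i = _
  obtain ⟨S, hS⟩ := hs
  rw [hS.tsum_eq]
  have l1 : |x₁| < 1 := by linarith
  have l3 : |x₃| < 1 := by linarith
  have hd : HasSum (fun i : ℕ × ℕ × ℕ => if i = (0, 0, 0) then (1 : ℝ) else 0) 1 :=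
    hasSum_ite_eq _ _
  have R := ((((hasSum_sh1 hS).mul_left x₁).add ((hasSum_sh2 hS).mul_left x₂)).add
    ((hasSum_sh3 hS).mul_left x₃)).add hd |>.sub (hasSum_HH l1 l3)
  have E := hS.unique (by
    have hE := funext (FF_rec x₁ x₂ x₃)
    rw [← hE] at R
    exact R)
  have n1 : 1 - x₁ ≠ 0 := by have := le_abs_self x₁; intro h; linarith
  have n3 : 1 - x₃ ≠ 0 := by have := le_abs_self x₃; intro h; linarith
  have ns : 1 - x₁ - x₂ - x₃ ≠ 0 := by
    have := le_abs_self x₁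
    have := le_abs_self x₂
    have := le_abs_self x₃
    intro h; linarith
  rw [eq_div_iff (by positivity)]
  field_simp at E
  linear_combination E
end

section
/- For all real numbers x₁, x₂, x₃, x₄ with |x₁| + |x₂| + |x₃| + |x₄| < 1, one has Σ_{i₁,i₂,i₃,i₄ ≥ 0} Ω(i₁,i₂,i₃,i₄)·x₁^{i₁} x₂^{i₂} x₃^{i₃} x₄^{i₄} = (1/(1 − x₁ − x₂ − x₃ − x₄)) · [ (1 − x₁)(1 − x₁ − x₂ − x₄)/((1 − x₁ − x₂)(1 − x₁ − x₄)) + (1 − x₄)(1 − x₁ − x₃ − x₄)/((1 − x₁ − x₄)(1 − x₃ − x₄)) − 1 ]. -/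
section Combinatorics

open Finset

/-- `f` goes up at steps in `A` and down at steps in `B`. -/
def UDPat (N : ℕ) (A B : ℕ → Prop) (τ : Equiv.Perm (Fin N)) : Prop :=
  ∀ j, ∀ h : j + 1 < N,
    (A j → τ ⟨j, Nat.lt_of_succ_lt h⟩ < τ ⟨j + 1, h⟩) ∧
    (B j → τ ⟨j + 1, h⟩ < τ ⟨j, Nat.lt_of_succ_lt h⟩)

noncomputable def bet (N : ℕ) (A B : ℕ → Prop) : ℕ :=
  Nat.card {τ : Equiv.Perm (Fin N) // UDPat N A B τ}

theorem bet_congr {N N' : ℕ} (hN : N = N') {A B A' B' : ℕ → Prop}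
    (h : ∀ j, j + 1 < N → ((A j ↔ A' j) ∧ (B j ↔ B' j))) : bet N A B = bet N' A' B' := by
  subst hN
  unfold bet
  congr 1
  congr 1
  ext τ
  unfold UDPat
  refine forall_congr' fun j => forall_congr' fun hj => ?_
  rw [(h j hj).1, (h j hj).2]

theorem bet_split (N : ℕ) (A B : ℕ → Prop) (j₀ : ℕ) (hj : j₀ + 1 < N) (hA : ¬ A j₀)
    (hB : ¬ B j₀) :
    bet N A B = bet N (fun j => A j ∨ j = j₀) B + bet N A (fun j => B j ∨ j = j₀) := by
  classical
  unfold bet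
  rw [Nat.card_eq_fintype_card, Nat.card_eq_fintype_card, Nat.card_eq_fintype_card,
    Fintype.card_subtype, Fintype.card_subtype, Fintype.card_subtype, ← card_union_of_disjoint]
  · congr 1
    ext τ
    simp only [mem_filter, mem_univ, true_and, mem_union]
    constructor
    · intro h
      have hne : τ ⟨j₀, Nat.lt_of_succ_lt hj⟩ ≠ τ ⟨j₀ + 1, hj⟩ := by
        intro e
        have := τ.injective e
        simp at this
      rcases lt_or_gt_of_ne hne with h1 | h1
      · left
        intro j hj'
        refine ⟨?_, (h j hj').2⟩
        rintro (h2 | rfl)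
        · exact (h j hj').1 h2
        · exact h1
      · right
        intro j hj'
        refine ⟨(h j hj').1, ?_⟩
        rintro (h2 | rfl)
        · exact (h j hj').2 h2
        · exact h1
    · rintro (h | h)
      · exact fun j hj' => ⟨fun a => (h j hj').1 (Or.inl a), (h j hj').2⟩
      · exact fun j hj' => ⟨(h j hj').1, fun a => (h j hj').2 (Or.inl a)⟩
  · rw [Finset.disjoint_left]
    intro τ h1 h2
    simp only [mem_filter, mem_univ, true_and] at h1 h2
    exact lt_asymm ((h1 j₀ hj).1 (Or.inr rfl)) ((h2 j₀ hj).2 (Or.inr rfl))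

theorem compl_card_aux {m n : ℕ} (s : Finset (Fin (m + n))) (h : #s = m) : #sᶜ = n := by
  rw [card_compl, h, Fintype.card_fin]; omega

noncomputable def glue {m n : ℕ} (p : {s : Finset (Fin (m + n)) // #s = m} ×
    Equiv.Perm (Fin m) × Equiv.Perm (Fin n)) : Equiv.Perm (Fin (m + n)) :=
  finSumFinEquiv.symm.trans ((Equiv.sumCongr p.2.1 p.2.2).trans
    (finSumEquivOfFinset p.1.2 (compl_card_aux p.1.1 p.1.2)))

theorem glue_left {m n : ℕ} (p : {s : Finset (Fin (m + n)) // #s = m} ×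
    Equiv.Perm (Fin m) × Equiv.Perm (Fin n)) (i : Fin m) :
    glue p (Fin.castAdd n i) = p.1.1.orderEmbOfFin p.1.2 (p.2.1 i) := by
  simp [glue]

theorem glue_right {m n : ℕ} (p : {s : Finset (Fin (m + n)) // #s = m} ×
    Equiv.Perm (Fin m) × Equiv.Perm (Fin n)) (i : Fin n) :
    glue p (Fin.natAdd m i) =
      (p.1.1)ᶜ.orderEmbOfFin (compl_card_aux p.1.1 p.1.2) (p.2.2 i) := by
  simp [glue]

theorem glue_injective {m n : ℕ} : Function.Injective (@glue m n) := by
  have key : ∀ p : {s : Finset (Fin (m + n)) // #s = m} ×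
      Equiv.Perm (Fin m) × Equiv.Perm (Fin n),
      (p.1.1 : Set (Fin (m + n))) = Set.range (fun i : Fin m => glue p (Fin.castAdd n i)) := by
    intro p
    simp only [glue_left]
    have : (fun i : Fin m => p.1.1.orderEmbOfFin p.1.2 (p.2.1 i)) =
      (p.1.1.orderEmbOfFin p.1.2) ∘ p.2.1 := rfl
    rw [this, Set.range_comp, p.2.1.surjective.range_eq, Set.image_univ, range_orderEmbOfFin]
  rintro ⟨⟨s, hs⟩, σ, ρ⟩ ⟨⟨t, ht⟩, σ', ρ'⟩ h
  have h1 := key ⟨⟨s, hs⟩, σ, ρ⟩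
  have h2 := key ⟨⟨t, ht⟩, σ', ρ'⟩
  rw [h, ← h2] at h1
  simp only [coe_inj] at h1
  subst h1
  have e1 : σ = σ' := by
    ext1 i
    have := congrArg (fun f => f (Fin.castAdd n i)) h
    simp only [glue_left] at this
    exact (orderEmbOfFin _ _).injective this
  have e2 : ρ = ρ' := by
    ext1 i
    have := congrArg (fun f => f (Fin.natAdd m i)) h
    simp only [glue_right] at this
    exact (orderEmbOfFin _ _).injective this
  rw [e1, e2]

theorem glue_bijective {m n : ℕ} : Function.Bijective (@glue m n) := by
  classical
  rw [Fintype.bijective_iff_injective_and_card]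
  refine ⟨glue_injective, ?_⟩
  rw [Fintype.card_prod, Fintype.card_prod, Fintype.card_finset_len, Fintype.card_perm,
    Fintype.card_perm, Fintype.card_perm, Fintype.card_fin, Fintype.card_fin, Fintype.card_fin]
  rw [← Nat.add_choose_mul_factorial_mul_factorial m n, Nat.choose_symm_add, mul_assoc]

theorem glue_pat {m n : ℕ} (A B : ℕ → Prop) (hAB : ∀ j, j + 1 = m → ¬ A j ∧ ¬ B j)
    (p : {s : Finset (Fin (m + n)) // #s = m} × Equiv.Perm (Fin m) × Equiv.Perm (Fin n)) :
    UDPat (m + n) A B (glue p) ↔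
      UDPat m A B p.2.1 ∧ UDPat n (fun j => A (j + m)) (fun j => B (j + m)) p.2.2 := by
  have L : ∀ i (h : i < m) (h' : i < m + n), glue p ⟨i, h'⟩ =
      p.1.1.orderEmbOfFin p.1.2 (p.2.1 ⟨i, h⟩) := fun i h h' => glue_left p ⟨i, h⟩
  have R : ∀ i (h : i < n) (h' : i + m < m + n), glue p ⟨i + m, h'⟩ =
      (p.1.1)ᶜ.orderEmbOfFin (compl_card_aux p.1.1 p.1.2) (p.2.2 ⟨i, h⟩) := by
    intro i h h'
    rw [← glue_right]
    congr 1
    ext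
    simp [add_comm]
  constructor
  · intro H
    constructor
    · intro j hj
      have := H j (by omega)
      rw [L j (by omega), L (j+1) hj] at this
      simpa using this
    · intro j hj
      have := H (j + m) (by omega)
      simp only [show j + m + 1 = (j + 1) + m by omega] at this
      rw [R j (by omega), R (j+1) hj] at this
      simpa using this
  · rintro ⟨H1, H2⟩ j hj
    rcases lt_trichotomy (j + 1) m with h | h | h
    · have := H1 j h
      rw [L j (by omega), L (j+1) h]
      simpa using this
    · exact ⟨fun a => absurd a (hAB j h).1, fun a => absurd a (hAB j h).2⟩
    · obtain ⟨k, rfl⟩ : ∃ k, j = k + m := ⟨j - m, by omega⟩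
      have := H2 k (by omega)
      simp only [show k + m + 1 = (k + 1) + m by omega]
      rw [R k (by omega), R (k+1) (by omega)]
      simpa using this

theorem bet_mul (m n : ℕ) (A B : ℕ → Prop) (hAB : ∀ j, j + 1 = m → ¬ A j ∧ ¬ B j) :
    bet (m + n) A B =
      (m + n).choose n * bet m A B * bet n (fun j => A (j + m)) (fun j => B (j + m)) := by
  classical
  let e : ({s : Finset (Fin (m + n)) // #s = m} × Equiv.Perm (Fin m) × Equiv.Perm (Fin n)) ≃
      Equiv.Perm (Fin (m + n)) := Equiv.ofBijective glue glue_bijective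
  unfold bet
  have e1 : {τ : Equiv.Perm (Fin (m + n)) // UDPat (m + n) A B τ} ≃
      {s : Finset (Fin (m + n)) // #s = m} × ({σ : Equiv.Perm (Fin m) // UDPat m A B σ} ×
        {ρ : Equiv.Perm (Fin n) // UDPat n (fun j => A (j + m)) (fun j => B (j + m)) ρ}) := by
    refine Equiv.trans (e.subtypeEquiv
      (p := fun p => UDPat m A B p.2.1 ∧ UDPat n (fun j => A (j + m)) (fun j => B (j + m)) p.2.2)
      (fun p => (glue_pat A B hAB p).symm)).symm ?_
    exact
      { toFun := fun x => ⟨x.1.1, ⟨x.1.2.1, x.2.1⟩, ⟨x.1.2.2, x.2.2⟩⟩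
        invFun := fun y => ⟨⟨y.1, y.2.1.1, y.2.2.1⟩, y.2.1.2, y.2.2.2⟩
        left_inv := fun _ => rfl
        right_inv := fun _ => rfl }
  rw [Nat.card_congr e1, Nat.card_prod, Nat.card_prod, Nat.card_eq_fintype_card (α := {s // _}),
    Fintype.card_finset_len, Fintype.card_fin, Nat.choose_symm_add, mul_assoc]

theorem perm_strictMono_eq {n : ℕ} (τ : Equiv.Perm (Fin n)) (h : StrictMono τ) : τ = 1 := by
  have := Subsingleton.elim (StrictMono.orderIsoOfSurjective τ h τ.surjective) (OrderIso.refl _)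
  ext1 i
  exact congrArg (fun f => f i) this

theorem bet_up (n : ℕ) (A B : ℕ → Prop) (hA : ∀ j, j < n → A j) (hB : ∀ j, j < n → ¬ B j) :
    bet (n + 1) A B = 1 := by
  unfold bet
  rw [Nat.card_eq_one_iff_unique]
  refine ⟨⟨?_⟩, ⟨⟨1, ?_⟩⟩⟩
  · have : ∀ τ : Equiv.Perm (Fin (n + 1)), UDPat (n + 1) A B τ → τ = 1 := by
      intro τ h
      apply perm_strictMono_eq
      rw [Fin.strictMono_iff_lt_succ]
      intro i
      exact (h i.1 (by omega)).1 (hA _ i.2)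
    rintro ⟨a, ha⟩ ⟨b, hb⟩
    rw [Subtype.mk.injEq, this a ha, this b hb]
  · intro j hj
    refine ⟨fun _ => ?_, fun h => absurd h (hB j (by omega))⟩
    simp

theorem bet_down (n : ℕ) (A B : ℕ → Prop) (hA : ∀ j, j < n → ¬ A j) (hB : ∀ j, j < n → B j) :
    bet (n + 1) A B = 1 := by
  unfold bet
  rw [Nat.card_eq_one_iff_unique]
  refine ⟨⟨?_⟩, ⟨⟨Fin.revPerm, ?_⟩⟩⟩
  · have : ∀ τ : Equiv.Perm (Fin (n + 1)), UDPat (n + 1) A B τ → τ.trans Fin.revPerm = 1 := by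
      intro τ h
      apply perm_strictMono_eq
      rw [Fin.strictMono_iff_lt_succ]
      intro i
      have := (h i.1 (by omega)).2 (hB _ i.2)
      exact Fin.rev_lt_rev.mpr this
    rintro ⟨a, ha⟩ ⟨b, hb⟩
    rw [Subtype.mk.injEq]
    have := (this a ha).trans (this b hb).symm
    ext1 i
    have := congrArg (fun f => f i) this
    simpa using this
  · intro j hj
    refine ⟨fun h => absurd h (hA j (by omega)), fun _ => ?_⟩
    simp

/-- up steps -/
def upS (a b c : ℕ) (j : ℕ) : Prop := j < a ∨ (a + b ≤ j ∧ j < a + b + c)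
/-- down steps -/
def dnS (a b c d : ℕ) (j : ℕ) : Prop :=
  (a ≤ j ∧ j < a + b) ∨ (a + b + c ≤ j ∧ j < a + b + c + d)

noncomputable def om (a b c d : ℕ) : ℕ := bet (a + b + c + d + 1) (upS a b c) (dnS a b c d)

theorem om_rec4 (a b c d : ℕ) : om a b c (d + 1) + om a b (c + 1) d =
    (a + b + c + d + 2).choose (d + 1) * om a b c 0 := by
  have h1 := bet_split (a + b + c + 1 + (d + 1)) (upS a b c)
    (fun j => (a ≤ j ∧ j < a + b) ∨ (a + b + c + 1 ≤ j ∧ j < a + b + c + d + 1)) (a + b + c)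
    (by omega) (by unfold upS; omega) (by omega)
  rw [bet_mul _ _ _ _ (by intro j hj; unfold upS; omega), bet_down d _ _
    (by intro j hj; unfold upS; omega) (by intro j hj; omega), mul_one] at h1
  unfold om
  rw [add_comm]
  refine Eq.trans ?_ (h1.symm.trans ?_)
  · congr 1
    · apply bet_congr (by omega)
      intro j hj; unfold upS dnS; omega
    · apply bet_congr (by omega)
      intro j hj; unfold upS dnS; omega
  · congr 1
    · congr 1; omega
    · apply bet_congr (by omega)
      intro j hj; unfold upS dnS; omega

theorem om_rec3 (a b c : ℕ) : om a b (c + 1) 0 + om a (b + 1) c 0 =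
    (a + b + c + 2).choose (c + 1) * om a b 0 0 := by
  have h1 := bet_split (a + b + 1 + (c + 1))
    (fun j => j < a ∨ (a + b + 1 ≤ j ∧ j < a + b + c + 1)) (dnS a b 0 0) (a + b)
    (by omega) (by omega) (by unfold dnS; omega)
  rw [bet_mul _ _ _ _ (by intro j hj; unfold dnS; omega), bet_up c _ _
    (by intro j hj; omega) (by intro j hj; unfold dnS; omega), mul_one] at h1
  unfold om
  refine Eq.trans ?_ (h1.symm.trans ?_)
  · congr 1
    · apply bet_congr (by omega)
      intro j hj; unfold upS dnS; omega
    · apply bet_congr (by omega)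
      intro j hj; unfold upS dnS; omega
  · congr 1
    · congr 1; omega
    · apply bet_congr (by omega)
      intro j hj; unfold upS dnS; omega

theorem om_one (a c : ℕ) : om a 0 c 0 = 1 := by
  unfold om
  exact bet_up _ _ _ (by intro j hj; unfold upS; omega) (by intro j hj; unfold dnS; omega)

theorem om_rec2 (a b : ℕ) : om a (b + 1) 0 0 + om (a + 1) b 0 0 =
    (a + b + 2).choose (b + 1) := by
  have h1 := bet_split (a + 1 + (b + 1)) (fun j => j < a)
    (fun j => a + 1 ≤ j) a (by omega) (by omega) (by omega)
  rw [bet_mul _ _ _ _ (by intro j hj; omega), bet_down b _ _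
    (by intro j hj; omega) (by intro j hj; omega), bet_up a _ _
    (by intro j hj; omega) (by intro j hj; omega), mul_one, mul_one] at h1
  unfold om
  rw [add_comm]
  refine Eq.trans ?_ (h1.symm.trans ?_)
  · congr 1
    · apply bet_congr (by omega)
      intro j hj; unfold upS dnS; omega
    · apply bet_congr (by omega)
      intro j hj; unfold upS dnS; omega
  · congr 1; omega

theorem om_two (a b : ℕ) : om a b 0 0 = (a + b).choose b := by
  induction b generalizing a with
  | zero => simp [om_one]
  | succ b ih =>
    have h := om_rec2 a b
    rw [ih, Nat.choose_succ_succ' (a + b + 1) b] at h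
    rw [show a + 1 + b = a + b + 1 by omega] at h
    rw [← add_assoc]
    omega

theorem om_zero3 (a b d : ℕ) : om a b 0 d = (a + (b + d)).choose (b + d) := by
  rw [← om_two]
  unfold om
  apply bet_congr (by omega)
  intro j hj; unfold upS dnS; omega

theorem Omega_eq_om (a b c d : ℕ) : Omega [a, b, c, d] = om a b c d := by
  have hs : [a, b, c, d].sum + 1 = a + b + c + d + 1 := by simp; omega
  have : Omega [a, b, c, d] = bet ([a, b, c, d].sum + 1) (upS a b c) (dnS a b c d) := by
    unfold Omega bet
    congr 1
    congr 1
    ext τ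
    unfold MonotCond UDPat
    constructor
    · intro H j hj
      have H0 := H 0 (by simp) j
      have H1 := H 1 (by simp) j
      have H2 := H 2 (by simp) j
      have H3 := H 3 (by simp) j
      simp at H0 H1 H2 H3
      unfold upS dnS
      constructor
      · rintro (h | h)
        · exact H0 h (by simpa using hj)
        · exact H2 (by omega) (by omega) (by simpa using hj)
      · rintro (h | h)
        · exact H1 (by omega) (by omega) (by simpa using hj)
        · exact H3 (by omega) (by omega)
    · intro H k hk j h1 h2 h
      have HH := H j h
      unfold upS dnS at HH
      simp at hk
      interval_cases k
      · simp at h1 h2 ⊢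
        exact HH.1 (by omega)
      · simp at h1 h2 ⊢
        exact HH.2 (by omega)
      · simp at h1 h2 ⊢
        exact HH.1 (by omega)
      · simp at h1 h2 ⊢
        exact HH.2 (by omega)
  rw [this]
  unfold om
  exact bet_congr hs (fun j hj => ⟨Iff.rfl, Iff.rfl⟩)

end Combinatorics

section Analysis

open Filter Topology

/-- Summing out a binomial variable. -/
theorem hasSum_binom {ι : Type*} (k : ι → ℕ) (g : ι → ℝ) (w V : ℝ) (hw : |w| < 1)
    (hs : Summable fun i => |g i| / (1 - |w|) ^ (k i + 1))
    (hV : HasSum (fun i => g i / (1 - w) ^ (k i + 1)) V) :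
    HasSum (fun s : ι × ℕ => g s.1 * ((s.2 + k s.1).choose (k s.1) : ℝ) * w ^ s.2) V := by
  have h1 : ∀ (t : ℝ) (G : ι → ℝ), |t| < 1 → ∀ i, HasSum (fun n : ℕ =>
      G i * ((n + k i).choose (k i) : ℝ) * t ^ n) (G i / (1 - t) ^ (k i + 1)) := by
    intro t G ht i
    have := (hasSum_choose_mul_geometric_of_norm_lt_one (k i) (r := t) ht).mul_left (G i)
    simpa [mul_assoc, div_eq_mul_inv] using this
  have hsum : Summable (fun s : ι × ℕ => g s.1 * ((s.2 + k s.1).choose (k s.1) : ℝ) * w ^ s.2) := by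
    apply Summable.of_norm
    simp only [norm_mul, norm_pow, Real.norm_eq_abs, Nat.abs_cast]
    have hw' : |(|w|)| < 1 := by rwa [abs_abs]
    rw [summable_prod_of_nonneg (fun s => by positivity)]
    refine ⟨fun i => (h1 |w| (fun i => |g i|) hw' i).summable, ?_⟩
    simp only [(h1 |w| (fun i => |g i|) hw' _).tsum_eq]
    exact hs
  have := hsum.hasSum.prod_fiberwise (fun i => h1 w g hw i)
  rw [← this.unique hV]
  exact hsum.hasSum

theorem tsum_peel {κ : Type*} (h : κ × ℕ → ℝ) (hs : Summable h) :
    ∑' s, h s = ∑' k, h (k, 0) + ∑' s : κ × ℕ, h (s.1, s.2 + 1) := by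
  have h0 : Summable fun k => h (k, 0) := by
    refine hs.comp_injective (i := fun k => (k, 0)) ?_
    intro a b hab; simpa using hab
  have h1 : Summable fun s : κ × ℕ => h (s.1, s.2 + 1) := by
    refine hs.comp_injective (i := fun s : κ × ℕ => (s.1, s.2 + 1)) ?_
    rintro ⟨a, b⟩ ⟨c, d⟩ hab; simpa using hab
  rw [hs.tsum_prod, h1.tsum_prod, ← h0.tsum_add h1.prod]
  congr 1
  ext k
  exact (hs.prod_factor k).tsum_eq_zero_add

/-- Removable singularity. -/
theorem eq_of_mul_eq (S Q : ℝ → ℝ) (w R : ℝ) (hS : ContinuousOn S (Metric.ball 0 R))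
    (hQ : ContinuousOn Q (Metric.ball 0 R))
    (h : ∀ z ∈ Metric.ball (0 : ℝ) R, (z + w) * S z = (z + w) * Q z) :
    ∀ z ∈ Metric.ball (0 : ℝ) R, S z = Q z := by
  intro z hz
  by_cases hzw : z + w = 0
  · have hb : Metric.ball (0 : ℝ) R ∈ 𝓝 z := Metric.isOpen_ball.mem_nhds hz
    have t1 : Tendsto S (𝓝[≠] z) (𝓝 (S z)) := (hS.continuousAt hb).mono_left nhdsWithin_le_nhds
    have t2 : Tendsto Q (𝓝[≠] z) (𝓝 (Q z)) := (hQ.continuousAt hb).mono_left nhdsWithin_le_nhds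
    refine tendsto_nhds_unique_of_eventuallyEq t1 t2 ?_
    filter_upwards [self_mem_nhdsWithin, nhdsWithin_le_nhds hb] with y hy hyb
    have hne : y + w ≠ 0 := by
      intro h0; apply hy; simp only [Set.mem_singleton_iff]; linarith
    exact mul_left_cancel₀ hne (h y hyb)
  · exact mul_left_cancel₀ hzw (h z hz)

/-- Master step: adding one more block. -/
theorem master {ι : Type*} (deg : ι → ℕ) (μ : ι → ℝ) (p : ι → ℕ → ℕ) (q : ι → ℕ → ℕ → ℕ)
    (h0 : ∀ i c, q i c 0 = p i c)
    (hrec : ∀ i c d, q i c (d + 1) + q i (c + 1) d =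
      (deg i + c + d + 2).choose (d + 1) * p i c)
    (w R : ℝ) (hw : |w| < 1) (P Q : ℝ → ℝ) (Q0 : ℝ)
    (habs : ∀ r, 0 ≤ r → r < R → Summable fun s : ι × ℕ =>
      (p s.1 s.2 * (|μ s.1| * r ^ s.2) : ℝ) / (1 - |w|) ^ (deg s.1 + s.2 + 2))
    (hP : ∀ z, |z| < R → HasSum (fun s : ι × ℕ =>
      (p s.1 s.2 * (μ s.1 * z ^ s.2) : ℝ) / (1 - w) ^ (deg s.1 + s.2 + 2)) (P z))
    (hQ0 : HasSum (fun s : ι × ℕ => (q s.1 0 s.2 * μ s.1 * w ^ s.2 : ℝ)) Q0)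
    (hQc : ContinuousOn Q (Metric.ball 0 R))
    (hQ : ∀ z, |z| < R → z * P z + w * Q0 = (z + w) * Q z) (z : ℝ) (hz : |z| < R) :
    HasSum (fun s : (ι × ℕ) × ℕ => (q s.1.1 s.1.2 s.2 * (μ s.1.1 * z ^ s.1.2) * w ^ s.2 : ℝ))
      (Q z) := by
  -- binomial sums
  have hbin : ∀ z, |z| < R → HasSum (fun s : (ι × ℕ) × ℕ =>
      (p s.1.1 s.1.2 * (μ s.1.1 * z ^ s.1.2) : ℝ) *
        ((s.2 + (deg s.1.1 + s.1.2 + 1)).choose (deg s.1.1 + s.1.2 + 1) : ℝ) * w ^ s.2) (P z) := by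
    intro z hz
    refine hasSum_binom (fun s : ι × ℕ => deg s.1 + s.2 + 1)
      (fun s => (p s.1 s.2 * (μ s.1 * z ^ s.2) : ℝ)) w (P z) hw ?_ ?_
    · have := habs |z| (abs_nonneg z) hz
      simpa [abs_mul, abs_pow] using this
    · exact hP z hz
  -- bound
  have hle : ∀ i c d, q i c d ≤ (d + (deg i + c + 1)).choose (deg i + c + 1) * p i c := by
    intro i c d
    cases d with
    | zero => simp [h0]
    | succ d =>
      have := hrec i c d
      have e : (d + 1 + (deg i + c + 1)).choose (deg i + c + 1) =
          (deg i + c + d + 2).choose (d + 1) := by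
        rw [Nat.choose_symm_add.symm]
        congr 1; omega
      rw [e]; omega
  have hsumabs : ∀ z, |z| < R → Summable (fun s : (ι × ℕ) × ℕ =>
      (q s.1.1 s.1.2 s.2 * (|μ s.1.1| * |z| ^ s.1.2) * |w| ^ s.2 : ℝ)) := by
    intro z hz
    refine Summable.of_nonneg_of_le (fun s => by positivity) (fun s => ?_) (hbin z hz).summable.norm
    simp only [norm_mul, norm_pow, Real.norm_eq_abs, Nat.abs_cast]
    have h := hle s.1.1 s.1.2 s.2
    have h' : (q s.1.1 s.1.2 s.2 : ℝ) ≤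
      ((s.2 + (deg s.1.1 + s.1.2 + 1)).choose (deg s.1.1 + s.1.2 + 1) : ℝ) * p s.1.1 s.1.2 := by
      exact_mod_cast h
    have h2 : 0 ≤ |μ s.1.1| * |z| ^ s.1.2 := by positivity
    have h3 : 0 ≤ |w| ^ s.2 := by positivity
    calc _ ≤ (((s.2 + (deg s.1.1 + s.1.2 + 1)).choose (deg s.1.1 + s.1.2 + 1) : ℝ) * p s.1.1 s.1.2) *
          (|μ s.1.1| * |z| ^ s.1.2) * |w| ^ s.2 := by gcongr
      _ = _ := by ring
  have hsum : ∀ z, |z| < R → Summable (fun s : (ι × ℕ) × ℕ =>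
      (q s.1.1 s.1.2 s.2 * (μ s.1.1 * z ^ s.1.2) * w ^ s.2 : ℝ)) := by
    intro z hz
    apply Summable.of_norm
    have := hsumabs z hz
    simpa [abs_mul, abs_pow] using this
  set S : ℝ → ℝ := fun z => ∑' s : (ι × ℕ) × ℕ,
    (q s.1.1 s.1.2 s.2 * (μ s.1.1 * z ^ s.1.2) * w ^ s.2 : ℝ) with hSdef
  have hScont : ContinuousOn S (Metric.ball 0 R) := by
    intro z hz
    rw [mem_ball_zero_iff, Real.norm_eq_abs] at hz
    obtain ⟨r, hr1, hr2⟩ := exists_between hz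
    have hr0 : 0 ≤ r := (abs_nonneg z).trans hr1.le
    have hc : ContinuousOn S (Metric.ball 0 r) := by
      have hr : |r| < R := by rwa [abs_of_nonneg hr0]
      refine continuousOn_tsum (fun s => ?_) (hsumabs r hr) (fun s y hy => ?_)
      · fun_prop
      · rw [mem_ball_zero_iff, Real.norm_eq_abs] at hy
        simp only [norm_mul, norm_pow, Real.norm_eq_abs, Nat.abs_cast]
        have : |y| ≤ |r| := by rw [abs_of_nonneg hr0]; exact hy.le
        gcongr
    have hzb : Metric.ball (0 : ℝ) r ∈ 𝓝 z := Metric.isOpen_ball.mem_nhds (by simpa using hr1)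
    exact (hc.continuousAt hzb).continuousWithinAt
  have hfun : ∀ z ∈ Metric.ball (0 : ℝ) R, (z + w) * S z = (z + w) * Q z := by
    intro z hz
    rw [mem_ball_zero_iff, Real.norm_eq_abs] at hz
    rw [← hQ z hz]
    -- peel d
    have e1 := tsum_peel _ (hsum z hz)
    have e2 := tsum_peel _ (hbin z hz).summable
    rw [(hbin z hz).tsum_eq] at e2
    simp only [h0, pow_zero, mul_one, zero_add, Nat.choose_self, Nat.cast_one] at e1 e2
    -- peel c
    let e : (ι × ℕ) × ℕ ≃ (ι × ℕ) × ℕ :=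
      { toFun := fun s => ((s.1.1, s.2), s.1.2)
        invFun := fun s => ((s.1.1, s.2), s.1.2)
        left_inv := fun _ => rfl
        right_inv := fun _ => rfl }
    have hsw : Summable (fun s : (ι × ℕ) × ℕ =>
        (q s.1.1 s.2 s.1.2 * (μ s.1.1 * z ^ s.2) * w ^ s.1.2 : ℝ)) :=
      (e.summable_iff).mpr (hsum z hz)
    have e3 := tsum_peel _ hsw
    have e4 : ∑' s : (ι × ℕ) × ℕ, (q s.1.1 s.2 s.1.2 * (μ s.1.1 * z ^ s.2) * w ^ s.1.2 : ℝ) = S z :=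
      e.tsum_eq (fun s : (ι × ℕ) × ℕ =>
        (q s.1.1 s.1.2 s.2 * (μ s.1.1 * z ^ s.1.2) * w ^ s.2 : ℝ))
    have e5 : ∑' s : (ι × ℕ) × ℕ,
        (q s.1.1 (s.2 + 1) s.1.2 * (μ s.1.1 * z ^ (s.2 + 1)) * w ^ s.1.2 : ℝ) =
        ∑' s : (ι × ℕ) × ℕ,
        (q s.1.1 (s.1.2 + 1) s.2 * (μ s.1.1 * z ^ (s.1.2 + 1)) * w ^ s.2 : ℝ) :=
      e.tsum_eq (fun s : (ι × ℕ) × ℕ =>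
        (q s.1.1 (s.1.2 + 1) s.2 * (μ s.1.1 * z ^ (s.1.2 + 1)) * w ^ s.2 : ℝ))
    simp only [pow_zero, mul_one] at e3
    rw [e4, e5, hQ0.tsum_eq] at e3
    have s1 : Summable (fun s : (ι × ℕ) × ℕ =>
        (q s.1.1 s.1.2 (s.2 + 1) * (μ s.1.1 * z ^ s.1.2) * w ^ (s.2 + 1) : ℝ)) := by
      refine (hsum z hz).comp_injective (i := fun s : (ι × ℕ) × ℕ => (s.1, s.2 + 1)) ?_
      rintro ⟨a, b⟩ ⟨c, d⟩ hab; simpa using hab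
    have s2 : Summable (fun s : (ι × ℕ) × ℕ =>
        (q s.1.1 (s.1.2 + 1) s.2 * (μ s.1.1 * z ^ (s.1.2 + 1)) * w ^ s.2 : ℝ)) := by
      refine (hsum z hz).comp_injective
        (i := fun s : (ι × ℕ) × ℕ => ((s.1.1, s.1.2 + 1), s.2)) ?_
      rintro ⟨⟨a, b⟩, b'⟩ ⟨⟨c, d⟩, d'⟩ hab; simpa using hab
    have e6 : z * ∑' s : (ι × ℕ) × ℕ,
        (q s.1.1 s.1.2 (s.2 + 1) * (μ s.1.1 * z ^ s.1.2) * w ^ (s.2 + 1) : ℝ) +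
        w * ∑' s : (ι × ℕ) × ℕ,
        (q s.1.1 (s.1.2 + 1) s.2 * (μ s.1.1 * z ^ (s.1.2 + 1)) * w ^ s.2 : ℝ) =
        z * ∑' s : (ι × ℕ) × ℕ, (p s.1.1 s.1.2 * (μ s.1.1 * z ^ s.1.2) : ℝ) *
        ((s.2 + 1 + (deg s.1.1 + s.1.2 + 1)).choose (deg s.1.1 + s.1.2 + 1) : ℝ) *
          w ^ (s.2 + 1) := by
      rw [← tsum_mul_left, ← tsum_mul_left, ← tsum_mul_left,
        ← (s1.mul_left z).tsum_add (s2.mul_left w)]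
      congr 1
      ext s
      have h := hrec s.1.1 s.1.2 s.2
      have ee : (s.2 + 1 + (deg s.1.1 + s.1.2 + 1)).choose (deg s.1.1 + s.1.2 + 1) =
          (deg s.1.1 + s.1.2 + s.2 + 2).choose (s.2 + 1) := by
        rw [Nat.choose_symm_add.symm]
        congr 1; omega
      rw [ee]
      have h' : (q s.1.1 s.1.2 (s.2 + 1) : ℝ) + q s.1.1 (s.1.2 + 1) s.2 =
          ((deg s.1.1 + s.1.2 + s.2 + 2).choose (s.2 + 1) : ℝ) * p s.1.1 s.1.2 := by
        exact_mod_cast h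
      linear_combination (μ s.1.1 * z ^ (s.1.2 + 1) * w ^ (s.2 + 1)) * h'
    have e1' : S z = _ := e1
    linear_combination z * e1' + w * e3 - z * e2 + e6
  have := eq_of_mul_eq S Q w R hScont hQc hfun z (by simpa using hz)
  rw [← this]
  exact (hsum z hz).hasSum

end Analysis

section Final

theorem hs_congr {ι : Type*} {f g : ι → ℝ} {a b : ℝ} (h : HasSum f a) (hf : ∀ i, g i = f i)
    (ha : b = a) : HasSum g b := by
  rw [ha, funext hf]
  exact h

theorem geom_div (x y : ℝ) (h : |x| + |y| < 1) :
    HasSum (fun n : ℕ => x ^ n / (1 - y) ^ (n + 1)) (1 / (1 - x - y)) := by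
  have hy : 0 < 1 - y := by have := le_abs_self y; have := abs_nonneg x; linarith
  have hxy : 0 < 1 - x - y := by have := le_abs_self y; have := le_abs_self x; linarith
  have hr : ‖x / (1 - y)‖ < 1 := by
    rw [Real.norm_eq_abs, abs_div, abs_of_pos hy, div_lt_one hy]
    have := le_abs_self y; linarith
  have := (hasSum_geometric_of_norm_lt_one hr).mul_left (1 / (1 - y))
  refine hs_congr this (fun n => ?_) ?_
  · beta_reduce; rw [div_pow, pow_succ]; field_simp
  · have : 1 - x / (1 - y) = (1 - x - y) / (1 - y) := by field_simp; ring
    rw [this]; field_simp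

theorem F2 (x y : ℝ) (h : |x| + |y| < 1) :
    HasSum (fun s : ℕ × ℕ => (om s.1 s.2 0 0 * (x ^ s.1 * y ^ s.2) : ℝ)) (1 / (1 - x - y)) := by
  have hy : |y| < 1 := by have := abs_nonneg x; linarith
  have := hasSum_binom (fun a : ℕ => a) (fun a => x ^ a) y _ hy
    (by simpa [abs_pow] using (geom_div |x| |y| (by simpa using h)).summable) (geom_div x y h)
  convert this using 1
  ext s
  rw [om_two, Nat.choose_symm_add.symm, add_comm s.2 s.1]
  ring

theorem scale_abs (u t : ℝ) (ht : |t| < 1) : |u / (1 - t)| ≤ |u| / (1 - |t|) := by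
  have h1 := le_abs_self t
  have h2 : 0 < 1 - |t| := by linarith
  have h3 : 0 < 1 - t := by linarith
  rw [abs_div, abs_of_pos h3]
  gcongr

theorem F3 (x y z : ℝ) (h : |x| + |y| + |z| < 1) :
    HasSum (fun s : (ℕ × ℕ) × ℕ => (om s.1.1 s.1.2 s.2 0 * (x ^ s.1.1 * y ^ s.1.2) * z ^ s.2 : ℝ))
      ((1 - x - z) / ((1 - x) * (1 - z) * (1 - x - y - z))) := by
  have hx0 := abs_nonneg x
  have hy0 := abs_nonneg y
  have hz0 := abs_nonneg z
  have hx1 := le_abs_self x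
  have hz1 := le_abs_self z
  have hz : |z| < 1 := by linarith
  -- scaled sums
  have key : ∀ x y z : ℝ, |x| + |y| + |z| < 1 → HasSum (fun s : ℕ × ℕ =>
      (om s.1 s.2 0 0 * (x ^ s.1 * y ^ s.2) : ℝ) / (1 - z) ^ (s.1 + s.2 + 2))
      (1 / ((1 - z) * (1 - x - y - z))) := by
    intro x y z h
    have hx0 := abs_nonneg x
    have hy0 := abs_nonneg y
    have hx1 := le_abs_self x
    have hy1 := le_abs_self y
    have hz1 := le_abs_self z
    have hz : |z| < 1 := by linarith
    have p1 : 0 < 1 - z := by linarith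
    have p2 : 0 < 1 - x - y - z := by linarith
    have hlt : |x / (1 - z)| + |y / (1 - z)| < 1 := by
      have := scale_abs x z hz
      have := scale_abs y z hz
      have : |x| / (1 - |z|) + |y| / (1 - |z|) < 1 := by
        rw [← add_div, div_lt_one (by linarith)]; linarith
      linarith
    have := (F2 _ _ hlt).mul_left (1 / (1 - z) ^ 2)
    refine hs_congr this (fun s => ?_) ?_
    · beta_reduce
      rw [div_pow, div_pow, pow_add, pow_add]
      field_simp
    · have : 1 - x / (1 - z) - y / (1 - z) = (1 - x - y - z) / (1 - z) := by field_simp; ring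
      rw [this]; field_simp
  refine master (fun a : ℕ => a) (fun a => x ^ a) (fun a b => om a b 0 0)
    (fun a b c => om a b c 0) (fun _ _ => rfl) (fun a b c => om_rec3 a b c) z (1 - |x| - |z|) hz
    (fun y => 1 / ((1 - z) * (1 - x - y - z)))
    (fun y => (1 - x - z) / ((1 - x) * (1 - z) * (1 - x - y - z)))
    (1 / ((1 - x) * (1 - z))) ?_ ?_ ?_ ?_ ?_ y (by linarith)
  · intro r hr hr'
    have := (key |x| r |z| (by simp only [abs_abs, abs_of_nonneg hr]; linarith)).summable
    simpa [abs_pow] using this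
  · intro y hy
    exact key x y z (by linarith)
  · have a1 := hasSum_geometric_of_norm_lt_one (ξ := x) (by rw [Real.norm_eq_abs]; linarith)
    have a2 := hasSum_geometric_of_norm_lt_one (ξ := z) (by rw [Real.norm_eq_abs]; linarith)
    have := a1.mul a2 (summable_mul_of_summable_norm a1.summable.norm a2.summable.norm)
    simp only [om_one]
    simpa [mul_comm (1 - x)⁻¹] using this
  · intro y hy
    rw [mem_ball_zero_iff, Real.norm_eq_abs] at hy
    have := le_abs_self y
    have p1 : 0 < 1 - x := by linarith
    have p2 : 0 < 1 - z := by linarith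
    have p3 : 0 < 1 - x - y - z := by linarith
    apply ContinuousAt.continuousWithinAt
    have : (1 - x) * (1 - z) * (1 - x - y - z) ≠ 0 := by positivity
    fun_prop (disch := assumption)
  · intro y hy
    have := le_abs_self y
    have p1 : 0 < 1 - x := by linarith
    have p2 : 0 < 1 - z := by linarith
    have p3 : 0 < 1 - x - y - z := by linarith
    field_simp
    ring

theorem F4_zero (x y w : ℝ) (h : |x| + |y| + |w| < 1) :
    HasSum (fun s : (ℕ × ℕ) × ℕ => (om s.1.1 s.1.2 0 s.2 * (x ^ s.1.1 * y ^ s.1.2) * w ^ s.2 : ℝ))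
      ((1 - x) / ((1 - x - y) * (1 - x - w))) := by
  have hx0 := abs_nonneg x
  have hy0 := abs_nonneg y
  have hw0 := abs_nonneg w
  have hx : |x| < 1 := by linarith
  have key : ∀ x y w : ℝ, |x| + |y| + |w| < 1 → HasSum (fun s : ℕ × ℕ =>
      (y ^ s.1 * w ^ s.2) / (1 - x) ^ (s.1 + s.2 + 1)) ((1 - x) / ((1 - x - y) * (1 - x - w))) := by
    intro x y w h
    have hx0 := abs_nonneg x
    have hy0 := abs_nonneg y
    have hw0 := abs_nonneg w
    have hx1 := le_abs_self x
    have hy1 := le_abs_self y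
    have hw1 := le_abs_self w
    have p1 : 0 < 1 - x := by linarith
    have p2 : 0 < 1 - x - y := by linarith
    have p3 : 0 < 1 - x - w := by linarith
    have g1 := geom_div y x (by linarith)
    have g2 := geom_div w x (by linarith)
    have g1a := (geom_div |y| |x| (by simp only [abs_abs]; linarith)).summable
    have g2a := (geom_div |w| |x| (by simp only [abs_abs]; linarith)).summable
    have hs := summable_mul_of_summable_norm g1.summable.norm g2.summable.norm
    have := ((g1.mul g2 hs).mul_left (1 - x))
    refine hs_congr this (fun s => ?_) ?_
    · beta_reduce
      rw [pow_succ, pow_add, pow_succ, pow_succ]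
      field_simp
    · rw [show 1 - y - x = 1 - x - y by ring, show 1 - w - x = 1 - x - w by ring]
      field_simp
  have := hasSum_binom (fun s : ℕ × ℕ => s.1 + s.2) (fun s => y ^ s.1 * w ^ s.2) x _ hx
    (by simpa [abs_pow, abs_mul] using (key |x| |y| |w| (by simpa using h)).summable) (key x y w h)
  let e : (ℕ × ℕ) × ℕ ≃ (ℕ × ℕ) × ℕ :=
    { toFun := fun s => ((s.1.2, s.2), s.1.1)
      invFun := fun s => ((s.2, s.1.1), s.1.2)
      left_inv := fun _ => rfl
      right_inv := fun _ => rfl }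
  have h2 := e.hasSum_iff.mpr this
  convert h2 using 1
  ext s
  simp only [om_zero3, e, Function.comp, Equiv.coe_fn_mk]
  ring

theorem F4 (x y z w : ℝ) (h : |x| + |y| + |z| + |w| < 1) :
    HasSum (fun s : ((ℕ × ℕ) × ℕ) × ℕ => (om s.1.1.1 s.1.1.2 s.1.2 s.2 *
      ((x ^ s.1.1.1 * y ^ s.1.1.2) * z ^ s.1.2) * w ^ s.2 : ℝ))
      ((1 / (1 - x - y - z - w)) *
        ((1 - x) * (1 - x - y - w) / ((1 - x - y) * (1 - x - w)) +
          (1 - w) * (1 - x - z - w) / ((1 - x - w) * (1 - z - w)) - 1)) := by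
  have hx0 := abs_nonneg x
  have hy0 := abs_nonneg y
  have hz0 := abs_nonneg z
  have hw0 := abs_nonneg w
  have hx1 := le_abs_self x
  have hy1 := le_abs_self y
  have hw1 := le_abs_self w
  have hw : |w| < 1 := by linarith
  have key : ∀ x y z w : ℝ, |x| + |y| + |z| + |w| < 1 → HasSum (fun s : (ℕ × ℕ) × ℕ =>
      (om s.1.1 s.1.2 s.2 0 * ((x ^ s.1.1 * y ^ s.1.2) * z ^ s.2) : ℝ) /
        (1 - w) ^ (s.1.1 + s.1.2 + s.2 + 2))
      ((1 - x - z - w) / ((1 - x - w) * (1 - z - w) * (1 - x - y - z - w))) := by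
    intro x y z w h
    have hx0 := abs_nonneg x
    have hy0 := abs_nonneg y
    have hz0 := abs_nonneg z
    have hx1 := le_abs_self x
    have hy1 := le_abs_self y
    have hz1 := le_abs_self z
    have hw1 := le_abs_self w
    have hw : |w| < 1 := by linarith
    have p1 : 0 < 1 - w := by linarith
    have p2 : 0 < 1 - x - y - z - w := by linarith
    have p3 : 0 < 1 - x - w := by linarith
    have p4 : 0 < 1 - z - w := by linarith
    have hlt : |x / (1 - w)| + |y / (1 - w)| + |z / (1 - w)| < 1 := by
      have := scale_abs x w hw
      have := scale_abs y w hw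
      have := scale_abs z w hw
      have : |x| / (1 - |w|) + |y| / (1 - |w|) + |z| / (1 - |w|) < 1 := by
        rw [← add_div, ← add_div, div_lt_one (by linarith)]; linarith
      linarith
    have := (F3 _ _ _ hlt).mul_left (1 / (1 - w) ^ 2)
    refine hs_congr this (fun s => ?_) ?_
    · beta_reduce
      rw [div_pow, div_pow, div_pow, pow_add, pow_add, pow_add]
      field_simp
    · have e1 : 1 - x / (1 - w) - y / (1 - w) - z / (1 - w) = (1 - x - y - z - w) / (1 - w) := by
        field_simp; ring
      have e2 : 1 - x / (1 - w) - z / (1 - w) = (1 - x - z - w) / (1 - w) := by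
        field_simp; ring
      have e3 : 1 - x / (1 - w) = (1 - x - w) / (1 - w) := by field_simp; ring
      have e4 : 1 - z / (1 - w) = (1 - z - w) / (1 - w) := by field_simp; ring
      rw [e1, e2, e3, e4]; field_simp
  refine master (fun i : ℕ × ℕ => i.1 + i.2) (fun i => x ^ i.1 * y ^ i.2)
    (fun i c => om i.1 i.2 c 0)
    (fun i c d => om i.1 i.2 c d) (fun _ _ => rfl) (fun i c d => om_rec4 i.1 i.2 c d) w
    (1 - |x| - |y| - |w|) hw
    (fun z => (1 - x - z - w) / ((1 - x - w) * (1 - z - w) * (1 - x - y - z - w)))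
    (fun z => (1 / (1 - x - y - z - w)) *
        ((1 - x) * (1 - x - y - w) / ((1 - x - y) * (1 - x - w)) +
          (1 - w) * (1 - x - z - w) / ((1 - x - w) * (1 - z - w)) - 1))
    ((1 - x) / ((1 - x - y) * (1 - x - w))) ?_ ?_ ?_ ?_ ?_ z (by linarith)
  · intro r hr hr'
    have := (key |x| |y| r |w| (by simp only [abs_abs, abs_of_nonneg hr]; linarith)).summable
    simpa [abs_pow, abs_mul] using this
  · intro z hz
    exact key x y z w (by linarith)
  · exact F4_zero x y w (by linarith)
  · intro z hz
    rw [mem_ball_zero_iff, Real.norm_eq_abs] at hz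
    have := le_abs_self z
    have p1 : 0 < 1 - x - y - z - w := by linarith
    have p2 : 0 < 1 - x - y := by linarith
    have p3 : 0 < 1 - x - w := by linarith
    have p4 : 0 < 1 - z - w := by linarith
    apply ContinuousAt.continuousWithinAt
    have q1 : 1 - x - y - z - w ≠ 0 := by positivity
    have q2 : (1 - x - y) * (1 - x - w) ≠ 0 := by positivity
    have q3 : (1 - x - w) * (1 - z - w) ≠ 0 := by positivity
    fun_prop (disch := assumption)
  · intro z hz
    have := le_abs_self z
    have p1 : 0 < 1 - x - y - z - w := by linarith
    have p2 : 0 < 1 - x - y := by linarith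
    have p3 : 0 < 1 - x - w := by linarith
    have p4 : 0 < 1 - z - w := by linarith
    field_simp
    ring

end Final

theorem stmt_5 (x₁ x₂ x₃ x₄ : ℝ) (hx : |x₁| + |x₂| + |x₃| + |x₄| < 1) :
    ∑' i : ℕ × ℕ × ℕ × ℕ,
        (Omega [i.1, i.2.1, i.2.2.1, i.2.2.2] : ℝ) *
          x₁ ^ i.1 * x₂ ^ i.2.1 * x₃ ^ i.2.2.1 * x₄ ^ i.2.2.2 =
      (1 / (1 - x₁ - x₂ - x₃ - x₄)) *
        ((1 - x₁) * (1 - x₁ - x₂ - x₄) / ((1 - x₁ - x₂) * (1 - x₁ - x₄)) +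
          (1 - x₄) * (1 - x₁ - x₃ - x₄) / ((1 - x₁ - x₄) * (1 - x₃ - x₄)) - 1) := by
  have h := F4 x₁ x₂ x₃ x₄ hx
  rw [← h.tsum_eq]
  let e : ((ℕ × ℕ) × ℕ) × ℕ ≃ ℕ × ℕ × ℕ × ℕ :=
    { toFun := fun s => (s.1.1.1, s.1.1.2, s.1.2, s.2)
      invFun := fun s => (((s.1, s.2.1), s.2.2.1), s.2.2.2)
      left_inv := fun _ => rfl
      right_inv := fun _ => rfl }
  rw [← e.tsum_eq]
  congr 1
  ext s
  simp only [e, Equiv.coe_fn_mk, Omega_eq_om]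
  ring
end

section
/- For every positive integer k, one has Ω(1, k, 1) = k² + 3k + 1; that is, the number of permutations τ of {0, 1, …, k+2} satisfying τ(0) < τ(1) > τ(2) > ⋯ > τ(k+1) < τ(k+2) equals k² + 3k + 1. -/
/-- Numeric description of the admissible pairs `(τ 0, τ (k+2))`. -/
def GoodPair (k : ℕ) (p : Fin (k + 3) × Fin (k + 3)) : Prop :=
  p.1 ≠ p.2 ∧ p.1.val ≠ k + 2 ∧ p.2.val ≠ 0 ∧ ¬ (p.1.val = k + 1 ∧ p.2.val = k + 2) ∧
    ¬ (p.1.val = 0 ∧ p.2.val = 1)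

instance (k : ℕ) (p : Fin (k + 3) × Fin (k + 3)) : Decidable (GoodPair k p) := by
  unfold GoodPair; infer_instance

theorem goodPair_inner (k : ℕ) (x : Fin (k + 3)) (hx : x.val < k + 1) :
    (Finset.univ.filter (fun y => GoodPair k (x, y))).card = k + 1 := by
  have h : Finset.univ.filter (fun y => GoodPair k (x, y))
      = ({0, if x.val = 0 then 1 else x} : Finset (Fin (k + 3)))ᶜ := by
    ext y
    rw [Finset.mem_filter]
    simp only [GoodPair, Finset.mem_univ, true_and, Finset.mem_compl,
      Finset.mem_insert, Finset.mem_singleton]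
    split_ifs with h0 <;> simp only [Fin.ext_iff, ne_eq, Fin.val_zero, Fin.val_one] <;> omega
  rw [h, Finset.card_compl, Finset.card_pair, Fintype.card_fin]
  · omega
  · split_ifs with h0 <;> simp only [Fin.ext_iff, ne_eq, Fin.val_zero, Fin.val_one] <;> omega

theorem goodPair_card (k : ℕ) (hk : 0 < k) :
    Nat.card {p : Fin (k + 3) × Fin (k + 3) // GoodPair k p} = k ^ 2 + 3 * k + 1 := by
  rw [Nat.card_eq_fintype_card, Fintype.card_subtype, Finset.card_filter,
    Fintype.sum_prod_type, Fin.sum_univ_castSucc, Fin.sum_univ_castSucc]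
  simp only [← Finset.card_filter]
  rw [Finset.sum_congr rfl (fun x _ => goodPair_inner k x.castSucc.castSucc x.isLt)]
  have h1 : Finset.univ.filter (fun y => GoodPair k (Fin.last (k + 2), y)) = ∅ := by
    ext y
    simp [GoodPair]
  have h2 : Finset.univ.filter (fun y => GoodPair k ((Fin.last (k + 1)).castSucc, y))
      = ({0, (Fin.last (k + 1)).castSucc, Fin.last (k + 2)} : Finset (Fin (k + 3)))ᶜ := by
    ext y
    rw [Finset.mem_filter]
    simp only [GoodPair, Finset.mem_univ, true_and, Finset.mem_compl,
      Finset.mem_insert, Finset.mem_singleton]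
    simp only [Fin.ext_iff, ne_eq, Fin.val_zero, Fin.val_castSucc, Fin.val_last]
    rw [true_and]
    omega
  rw [h1, h2, Finset.card_compl, Finset.card_eq_three.mpr ⟨_, _, _, ?_, ?_, ?_, rfl⟩]
  · simp
    ring
  all_goals simp [Fin.ext_iff]

/-- The explicit pattern for a permutation of `{0, …, k+2}`. -/
def Pat (k : ℕ) (τ : Equiv.Perm (Fin (k + 3))) : Prop :=
  τ 0 < τ 1 ∧ τ (Fin.last (k + 1)).castSucc < τ (Fin.last (k + 2)) ∧
    StrictMono (fun i : Fin (k + 1) => τ i.rev.castSucc.succ)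

theorem card_compl_pair (k : ℕ) (x y : Fin (k + 3)) (h : x ≠ y) :
    (({x, y} : Finset (Fin (k + 3)))ᶜ).card = k + 1 := by
  rw [Finset.card_compl, Finset.card_pair h, Fintype.card_fin]
  omega

theorem pat_good (k : ℕ) (τ : Equiv.Perm (Fin (k + 3))) (h : Pat k τ) :
    GoodPair k (τ 0, τ (Fin.last (k + 2))) := by
  obtain ⟨h1, h2, -⟩ := h
  have n1 : τ 0 ≠ τ (Fin.last (k + 2)) := by simp [Fin.ext_iff]
  have n2 : τ 1 ≠ τ (Fin.last (k + 2)) := by simp [Fin.ext_iff]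
  have n3 : τ 0 ≠ τ (Fin.last (k + 1)).castSucc := by simp [Fin.ext_iff]
  simp only [GoodPair, Fin.ext_iff, Fin.lt_def, ne_eq] at *
  omega

theorem pat_inj (k : ℕ) (σ τ : Equiv.Perm (Fin (k + 3))) (hσ : Pat k σ) (hτ : Pat k τ)
    (h0 : σ 0 = τ 0) (hl : σ (Fin.last (k + 2)) = τ (Fin.last (k + 2))) : σ = τ := by
  have n1 : τ 0 ≠ τ (Fin.last (k + 2)) := by simp [Fin.ext_iff]
  have key : ∀ ρ : Equiv.Perm (Fin (k + 3)), Pat k ρ → ρ 0 = τ 0 →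
      ρ (Fin.last (k + 2)) = τ (Fin.last (k + 2)) →
      (fun i : Fin (k + 1) => ρ i.rev.castSucc.succ) =
        Finset.orderEmbOfFin _ (card_compl_pair k _ _ n1) := by
    intro ρ hρ e0 el
    apply Finset.orderEmbOfFin_unique _ _ hρ.2.2
    intro i
    rw [← e0, ← el]
    simp [Fin.ext_iff]
    omega
  have e := (key σ hσ h0 hl).trans (key τ hτ rfl rfl).symm
  ext1 j
  induction j using Fin.cases with
  | zero => exact h0
  | succ j =>
    induction j using Fin.lastCases with
    | last => exact hl
    | cast i => simpa using congrFun e i.rev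

theorem pat_surj (k : ℕ) (p : Fin (k + 3) × Fin (k + 3)) (hp : GoodPair k p) :
    ∃ τ, Pat k τ ∧ τ 0 = p.1 ∧ τ (Fin.last (k + 2)) = p.2 := by
  obtain ⟨x, y⟩ := p
  have hxy : x ≠ y := hp.1
  set e := Finset.orderEmbOfFin _ (card_compl_pair k x y hxy) with he
  have hmem : ∀ i, e i ≠ x ∧ e i ≠ y := by
    intro i
    have := Finset.orderEmbOfFin_mem _ (card_compl_pair k x y hxy) i
    rw [Finset.mem_compl] at this
    rw [Finset.mem_insert, Finset.mem_singleton, not_or] at this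
    exact this
  have hsur : ∀ w, w ≠ x → w ≠ y → ∃ i, e i = w := by
    intro w hx hy
    have : w ∈ Set.range e := by
      rw [he, Finset.range_orderEmbOfFin]; simp [hx, hy]
    exact this
  let f : Fin (k + 3) → Fin (k + 3) :=
    Fin.cons (α := fun _ => Fin (k + 3)) x
      (Fin.snoc (α := fun _ => Fin (k + 3)) (fun i : Fin (k + 1) => e i.rev) y)
  have f0 : f 0 = x := rfl
  have fl : f (Fin.last (k + 2)) = y := by
    rw [← Fin.succ_last]
    simp only [f, Fin.cons_succ, Fin.snoc_last]
  have fm : ∀ i : Fin (k + 1), f i.castSucc.succ = e i.rev := by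
    intro i
    simp only [f, Fin.cons_succ, Fin.snoc_castSucc]
  have fsur : Function.Surjective f := by
    intro w
    by_cases hx : w = x
    · exact ⟨0, by rw [f0, hx]⟩
    by_cases hy : w = y
    · exact ⟨_, by rw [fl, hy]⟩
    obtain ⟨i, hi⟩ := hsur w hx hy
    exact ⟨i.rev.castSucc.succ, by rw [fm, Fin.rev_rev, hi]⟩
  refine ⟨Equiv.ofBijective f (Finite.surjective_iff_bijective.mp fsur), ⟨?_, ?_, ?_⟩, f0, fl⟩
  · change f 0 < f 1
    have : (1 : Fin (k + 3)) = (0 : Fin (k + 1)).castSucc.succ := by simp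
    rw [f0, this, fm]
    have hw : ∃ w, w ≠ x ∧ w ≠ y ∧ x < w := by
      obtain ⟨a1, a2, a3, a4, a5⟩ := hp
      by_cases hy : y.val = k + 2
      · refine ⟨⟨k + 1, by omega⟩, ?_⟩
        simp only [Fin.ext_iff, Fin.lt_def, ne_eq] at *
        omega
      · refine ⟨⟨k + 2, by omega⟩, ?_⟩
        simp only [Fin.ext_iff, Fin.lt_def, ne_eq] at *
        omega
    obtain ⟨w, w1, w2, w3⟩ := hw
    obtain ⟨i, rfl⟩ := hsur w w1 w2
    refine w3.trans_le (e.monotone ?_)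
    rw [Fin.rev_zero]; exact Fin.le_last i
  · change f _ < f _
    have : (Fin.last (k + 1)).castSucc = (Fin.last k).castSucc.succ := by simp [Fin.ext_iff]
    rw [fl, this, fm]
    have hw : ∃ w, w ≠ x ∧ w ≠ y ∧ w < y := by
      obtain ⟨a1, a2, a3, a4, a5⟩ := hp
      by_cases hx : x.val = 0
      · refine ⟨⟨1, by omega⟩, ?_⟩
        simp only [Fin.ext_iff, Fin.lt_def, ne_eq] at *
        omega
      · refine ⟨⟨0, by omega⟩, ?_⟩
        simp only [Fin.ext_iff, Fin.lt_def, ne_eq] at *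
        omega
    obtain ⟨w, w1, w2, w3⟩ := hw
    obtain ⟨i, rfl⟩ := hsur w w1 w2
    refine lt_of_le_of_lt (e.monotone ?_) w3
    rw [Fin.rev_last]; exact Fin.zero_le i
  · intro i j hij
    change f _ < f _
    rw [fm, fm, Fin.rev_rev, Fin.rev_rev]
    exact e.strictMono hij

theorem pat_card (k : ℕ) (hk : 0 < k) :
    Nat.card {τ : Equiv.Perm (Fin (k + 3)) // Pat k τ} = k ^ 2 + 3 * k + 1 := by
  rw [← goodPair_card k hk]
  let F : {τ : Equiv.Perm (Fin (k + 3)) // Pat k τ} →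
      {p : Fin (k + 3) × Fin (k + 3) // GoodPair k p} :=
    fun τ => ⟨(τ.1 0, τ.1 (Fin.last (k + 2))), pat_good k τ.1 τ.2⟩
  apply Nat.card_congr (Equiv.ofBijective F ⟨?_, ?_⟩)
  · intro σ τ h
    have h' := congrArg Subtype.val h
    exact Subtype.ext (pat_inj k _ _ σ.2 τ.2 (congrArg Prod.fst h') (congrArg Prod.snd h'))
  · intro p
    obtain ⟨τ, h, h0, hl⟩ := pat_surj k p.1 p.2
    exact ⟨⟨τ, h⟩, Subtype.ext (Prod.ext h0 hl)⟩

/-- The pattern condition with a free size `n`, to allow substitution. -/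
def PatN (k n : ℕ) (τ : Equiv.Perm (Fin (n + 1))) : Prop :=
  ∀ j, ∀ h : j + 1 < n + 1,
    ((j = 0 ∨ j = k + 1) → τ ⟨j, Nat.lt_of_succ_lt h⟩ < τ ⟨j + 1, h⟩) ∧
    ((1 ≤ j ∧ j < k + 1) → τ ⟨j + 1, h⟩ < τ ⟨j, Nat.lt_of_succ_lt h⟩)

theorem patN_iff (k : ℕ) (τ : Equiv.Perm (Fin (k + 3))) : PatN k (k + 2) τ ↔ Pat k τ := by
  constructor
  · intro H
    refine ⟨(H 0 (by omega)).1 (Or.inl rfl), (H (k + 1) (by omega)).1 (Or.inr rfl), ?_⟩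
    rw [Fin.strictMono_iff_lt_succ]
    intro i
    have := (H (k - i.val) (by omega)).2 (by omega)
    convert this using 2 <;> first | rfl | (apply Fin.ext; simp; omega) | (apply Fin.ext; simp)
  · rintro ⟨h1, h2, h3⟩ j hj
    refine ⟨?_, ?_⟩
    · rintro (rfl | rfl)
      · exact h1
      · exact h2
    · rintro ⟨a, b⟩
      have := @h3 ⟨k - j, by omega⟩ ⟨k - j + 1, by omega⟩ (by simp [Fin.lt_def])
      convert this using 2 <;> first | rfl | (apply Fin.ext; simp; omega) | (apply Fin.ext; simp)

theorem patN_card (k n : ℕ) (hk : 0 < k) (hn : n = k + 2) :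
    Nat.card {τ : Equiv.Perm (Fin (n + 1)) // PatN k n τ} = k ^ 2 + 3 * k + 1 := by
  subst hn
  rw [← pat_card k hk]
  exact Nat.card_congr (Equiv.subtypeEquivRight (patN_iff k))

theorem monotCond_iff (k : ℕ) (τ : Equiv.Perm (Fin ([1, k, 1].sum + 1))) :
    MonotCond [1, k, 1] τ ↔ PatN k [1, k, 1].sum τ := by
  have hs : [1, k, 1].sum = k + 2 := by simp; omega
  constructor
  · intro H j h
    refine ⟨?_, ?_⟩
    · rintro (rfl | rfl)
      · simpa using H 0 (by simp) 0 (by simp) (by simp) h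
      · have := H 2 (by simp) (k + 1) (by simp; try omega) (by simp; try omega) h
        rwa [if_pos (by norm_num)] at this
    · rintro ⟨a, b⟩
      have := H 1 (by simp) j (by simpa using a) (by simp; omega) h
      rwa [if_neg (by norm_num)] at this
  · intro H m hm j h1 h2 h
    have hm' : m = 0 ∨ m = 1 ∨ m = 2 := by simp at hm; omega
    rcases hm' with rfl | rfl | rfl
    · rw [if_pos (by norm_num)]
      simp at h2
      exact (H j h).1 (Or.inl h2)
    · rw [if_neg (by norm_num)]
      simp at h1 h2
      exact (H j h).2 (by omega)
    · rw [if_pos (by norm_num)]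
      simp at h1 h2
      exact (H j h).1 (by omega)

theorem stmt_11 (k : ℕ) (hk : 0 < k) :
    Omega [1, k, 1] = k ^ 2 + 3 * k + 1 := by
  rw [← patN_card k [1, k, 1].sum hk (by simp; omega)]
  exact Nat.card_congr (Equiv.subtypeEquivRight (monotCond_iff k))
end
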